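/- Suppose the subgraph of positive edges is regular, i.e., |N_u^+| = |N_v^+| for all u,v ∈ V. Then the fractional cost of the correlation metric d in the ℓ1-norm objective is at most 6 times the optimum: Σ_{u∈V} Σ_{v∈N_u^+} d_uv + Σ_{u∈V} Σ_{v∈N_u^-} (1 − d_uv) ≤ 6 · OPT(1). -/

import Mathlib

/-!
A *bad triangle* is a triple with exactly two positive edges. With common degree `Δ` (self-loop
included) and `a = |N_u⁺ ∩ N_v⁺|` one has `|N_u⁺ ∪ N_v⁺| = 2Δ - a ≥ Δ`, so

* a positive edge costs `d_uv ≤ |N_u⁺ ∆ N_v⁺| / Δ`, i.e. the number of bad triangles through it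
  divided by `Δ`;
* a negative edge costs `1 - d_uv ≤ a / Δ`, again the number of bad triangles through it over `Δ`.

Every bad triangle has three edges, so the fractional cost is at most `3 T / Δ`, where `T` counts
bad triangles (`sum_cost_le`). Conversely, each clustering errs on at least one edge of each bad
triangle, and a positive (negative) edge lies in at most `2Δ` (resp. `Δ`) bad triangles; hence `T`
is at most `2Δ` times the number of disagreements (`badWeight_le`).

Bad triangles are counted as ordered triples through the `0`-`1` adjacency matrix `p`, with ones on
the diagonal: `p u v * p u w * (1 - p v w)` vanishes automatically on degenerate triples.
-/

open Finset

noncomputable section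

variable {V : Type*} [Fintype V] [DecidableEq V]

/-- Positive neighborhood of `u` (including the positive self-loop at `u`). -/
def Nplus (E : V → V → Prop) [DecidableRel E] (u : V) : Finset V :=
  insert u (Finset.univ.filter fun v => v ≠ u ∧ E u v)

/-- Negative neighborhood of `u`. -/
def Nminus (E : V → V → Prop) [DecidableRel E] (u : V) : Finset V :=
  Finset.univ.filter fun v => v ≠ u ∧ ¬ E u v

/-- The correlation metric `d`. -/
def corrDist (E : V → V → Prop) [DecidableRel E] (u v : V) : ℝ :=
  if u = v then 0
  else 1 - ((Nplus E u ∩ Nplus E v).card : ℝ) / ((Nplus E u ∪ Nplus E v).card : ℝ)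

/-- The set `R₁` of vertices `u` with `|N_u^- ∩ {v : d_uv ≤ 0.7}| ≥ (10/3)·Δ_u`. -/
def R1set (E : V → V → Prop) [DecidableRel E] : Finset V :=
  Finset.univ.filter fun u =>
    (10 / 3 : ℝ) * (Nplus E u).card ≤ ((Nminus E u).filter fun v => corrDist E u v ≤ 0.7).card

/-- The adjusted correlation metric `f`: start from `d`, round negative edges with
`d > 0.7` up to `1`, and set `f_uv = 1` for all `v ≠ u` whenever `u ∈ R₁`. -/
def adjDist (E : V → V → Prop) [DecidableRel E] (u v : V) : ℝ :=
  if u = v then 0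
  else if u ∈ R1set E ∨ v ∈ R1set E then 1
  else if ¬ E u v ∧ 0.7 < corrDist E u v then 1
  else corrDist E u v

/-- A clustering is encoded by a map `c : V → V`; the cluster `C(u)` is the fiber of `c` at `u`. -/
def clusterOf (c : V → V) (u : V) : Finset V :=
  Finset.univ.filter fun w => c w = c u

/-- The number of disagreements incident to `u` with respect to the clustering `c`. -/
def disag (E : V → V → Prop) [DecidableRel E] (c : V → V) (u : V) : ℕ :=
  (Finset.univ.filter fun v =>
    v ≠ u ∧ ((E u v ∧ c u ≠ c v) ∨ (¬ E u v ∧ c u = c v))).card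

/-- `OPT(1)`: the minimum total number of disagreements over all clusterings. -/
def OPT1 (E : V → V → Prop) [DecidableRel E] : ℕ :=
  Finset.univ.inf' ⟨id, Finset.mem_univ id⟩ fun c : V → V => ∑ u, disag E c u

/-- `OPT(p)`: the minimum `ℓ_p`-norm of the disagreement vector over all clusterings. -/
def OPTlp (E : V → V → Prop) [DecidableRel E] (p : ℝ) : ℝ :=
  Finset.univ.inf' ⟨id, Finset.mem_univ id⟩ fun c : V → V =>
    (∑ u, (disag E c u : ℝ) ^ p) ^ (1 / p)

/-- `OPT(∞)`: the minimum `ℓ_∞`-norm of the disagreement vector over all clusterings. -/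
def OPTinf (E : V → V → Prop) [DecidableRel E] : ℕ :=
  Finset.univ.inf' ⟨id, Finset.mem_univ id⟩ fun c : V → V => Finset.univ.sup (disag E c)

/-- The set of bad triangles: triples of distinct vertices spanning exactly two positive
edges and one negative edge. -/
def badTriangles (E : V → V → Prop) [DecidableRel E] : Finset (Finset V) :=
  Finset.univ.filter fun T =>
    ∃ u v w : V, u ≠ v ∧ u ≠ w ∧ v ≠ w ∧ T = {u, v, w} ∧ E u v ∧ E u w ∧ ¬ E v w

/-- The number of triples `(u, v, w)` with `uv`, `uw` positive and `vw` negative, for a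
`0`-`1` matrix `p` of positive pairs; each bad triangle is counted twice, by swapping `v`
and `w`. -/
def badWeight {W : Type*} [Fintype W] (p : W → W → ℝ) : ℝ :=
  ∑ u, ∑ v, ∑ w, p u v * p u w * (1 - p v w)

/-- Charging bad triangles to disagreements. Here `x` may be any pseudometric-like function with
values in `[0, 1]`, in particular the cut indicator of a clustering: the triangle inequality forces
total disagreement at least `1` on the edges of each bad triangle. -/
lemma badWeight_le {W : Type*} [Fintype W] (p x : W → W → ℝ) (D : ℝ)
    (hsymm : ∀ u v, p u v = p v u)
    (hp0 : ∀ u v, 0 ≤ p u v) (hp1 : ∀ u v, p u v ≤ 1) (hdeg : ∀ u, ∑ v, p u v = D)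
    (hD : 0 ≤ D) (hx0 : ∀ u v, 0 ≤ x u v) (hx1 : ∀ u v, x u v ≤ 1)
    (htri : ∀ u v w, x v w ≤ x u v + x u w) :
    badWeight p ≤ 2 * D * ∑ u, ∑ v, (p u v * x u v + (1 - p u v) * (1 - x u v)) := by
  have hpt : ∀ u v w, p u v * p u w * (1 - p v w) ≤
      p u v * x u v * p u w + p u w * x u w * p u v + (1 - p v w) * (1 - x v w) * p v u := by
    intro u v w
    have h1 := hp0 u v
    have h2 := hp0 u w
    have h3 : 0 ≤ 1 - p v w := by linarith [hp1 v w]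
    have h3' := hp0 v w
    have h4 : 0 ≤ 1 - x v w := by linarith [hx1 v w]
    have h2' : 0 ≤ 1 - p u w := by linarith [hp1 u w]
    -- The difference of the two sides is exactly the sum of the three nonnegative terms below.
    have a1 : 0 ≤ p u v * p u w * (1 - p v w) * (x u v + x u w - x v w) :=
      mul_nonneg (by positivity) (by linarith [htri u v w])
    have a2 : 0 ≤ p u v * p u w * p v w * (x u v + x u w) :=
      mul_nonneg (by positivity) (by linarith [hx0 u v, hx0 u w])
    have a3 : 0 ≤ (1 - p v w) * (1 - x v w) * p u v * (1 - p u w) := by positivity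
    rw [hsymm v u]
    nlinarith
  have e1 : ∑ u, ∑ v, ∑ w, p u v * x u v * p u w = D * ∑ u, ∑ v, p u v * x u v := by
    simp only [← Finset.mul_sum, hdeg]
    simp only [← Finset.sum_mul]
    ring
  have e2 : ∑ u, ∑ v, ∑ w, p u w * x u w * p u v = D * ∑ u, ∑ v, p u v * x u v := by
    rw [← e1]
    exact Finset.sum_congr rfl fun u _ => Finset.sum_comm
  have e3 : ∑ u, ∑ v, ∑ w, (1 - p v w) * (1 - x v w) * p v u
      = D * ∑ v, ∑ w, (1 - p v w) * (1 - x v w) := by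
    rw [Finset.sum_comm, Finset.mul_sum]
    refine Finset.sum_congr rfl fun v _ => ?_
    simp only [← Finset.sum_mul, ← Finset.mul_sum, hdeg]
    ring
  have hneg : 0 ≤ ∑ v, ∑ w, (1 - p v w) * (1 - x v w) :=
    Finset.sum_nonneg fun v _ => Finset.sum_nonneg fun w _ =>
      mul_nonneg (by linarith [hp1 v w]) (by linarith [hx1 v w])
  have hsum : badWeight p ≤ _ := Finset.sum_le_sum fun u _ => Finset.sum_le_sum fun v _ =>
    Finset.sum_le_sum fun w _ => hpt u v w
  simp only [Finset.sum_add_distrib, e1, e2, e3] at hsum ⊢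
  nlinarith [mul_nonneg hD hneg]

/-- Summing, over all pairs, the bad triangles through the pair counts each bad triangle once per
edge. -/
lemma sum_pairs_eq {W : Type*} [Fintype W] (p : W → W → ℝ)
    (hsymm : ∀ u v, p u v = p v u) :
    ∑ u, ∑ v, (p u v * ∑ w, (p u w * (1 - p v w) + p v w * (1 - p u w)) +
      (1 - p u v) * ∑ w, p u w * p v w) = 3 * badWeight p := by
  have e1 : ∑ u, ∑ v, ∑ w, p u v * (p u w * (1 - p v w)) = badWeight p := by
    simp only [badWeight, mul_assoc]
  have e2 : ∑ u, ∑ v, ∑ w, p u v * (p v w * (1 - p u w)) = badWeight p := by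
    rw [Finset.sum_comm, ← e1]
    refine Finset.sum_congr rfl fun u _ => Finset.sum_congr rfl fun v _ =>
      Finset.sum_congr rfl fun w _ => ?_
    rw [hsymm v u]
  have e3 : ∑ u, ∑ v, ∑ w, (1 - p u v) * (p u w * p v w) = badWeight p := by
    calc _ = ∑ u, ∑ w, ∑ v, (1 - p u v) * (p u w * p v w) :=
          Finset.sum_congr rfl fun u _ => Finset.sum_comm
      _ = ∑ w, ∑ u, ∑ v, (1 - p u v) * (p u w * p v w) := Finset.sum_comm
      _ = _ := by
          refine Finset.sum_congr rfl fun w _ => Finset.sum_congr rfl fun u _ =>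
            Finset.sum_congr rfl fun v _ => ?_
          rw [hsymm u w, hsymm v w]
          ring
  simp only [Finset.mul_sum, mul_add, Finset.sum_add_distrib]
  rw [e1, e2, e3]
  ring

/-- The `0`-`1` matrix of positive pairs, with ones on the diagonal. -/
def posInd (E : V → V → Prop) [DecidableRel E] (u v : V) : ℝ :=
  if v ∈ Nplus E u then 1 else 0

lemma mem_Nplus (E : V → V → Prop) [DecidableRel E] (u v : V) :
    v ∈ Nplus E u ↔ v = u ∨ E u v := by
  simp only [Nplus, Finset.mem_insert, Finset.mem_filter, Finset.mem_univ, true_and]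
  tauto

lemma mem_Nminus (E : V → V → Prop) [DecidableRel E] (u v : V) :
    v ∈ Nminus E u ↔ v ∉ Nplus E u := by
  rw [mem_Nplus]
  simp [Nminus]

lemma posInd_symm (E : V → V → Prop) [DecidableRel E] (hsymm : ∀ u v, E u v ↔ E v u) (u v : V) :
    posInd E u v = posInd E v u := by
  simp only [posInd, mem_Nplus, hsymm u v, eq_comm (a := v)]

lemma sum_posInd (E : V → V → Prop) [DecidableRel E] (u : V) :
    ∑ v, posInd E u v = ((Nplus E u).card : ℝ) := by
  simp [posInd]

lemma sum_posInd_mul (E : V → V → Prop) [DecidableRel E] (u v : V) :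
    ∑ w, posInd E u w * posInd E v w = ((Nplus E u ∩ Nplus E v).card : ℝ) := by
  simp only [posInd, ← ite_and, mul_ite, mul_one, mul_zero]
  rw [Finset.sum_boole]
  congr 2
  ext w
  simp [and_comm]

/-- The cost of a pair is at most the number of bad triangles through it, divided by the common
degree `D`; both sides are multiplied by `D`. -/
lemma pair_cost_le (E : V → V → Prop) [DecidableRel E]
    (D : ℝ) (hdeg : ∀ u, ((Nplus E u).card : ℝ) = D) (u v : V) :
    D * (posInd E u v * corrDist E u v + (1 - posInd E u v) * (1 - corrDist E u v)) ≤
      posInd E u v * ∑ w, (posInd E u w * (1 - posInd E v w) + posInd E v w * (1 - posInd E u w))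
      + (1 - posInd E u v) * ∑ w, posInd E u w * posInd E v w := by
  have hpos : 0 < D := by
    rw [← hdeg u]
    exact_mod_cast Finset.card_pos.mpr ⟨u, (mem_Nplus E u u).mpr (Or.inl rfl)⟩
  have hsd : ∑ w, (posInd E u w * (1 - posInd E v w) + posInd E v w * (1 - posInd E u w)) =
      2 * D - 2 * ((Nplus E u ∩ Nplus E v).card : ℝ) := by
    have : ∀ w, posInd E u w * (1 - posInd E v w) + posInd E v w * (1 - posInd E u w) =
      posInd E u w + posInd E v w - 2 * (posInd E u w * posInd E v w) := fun w => by ring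
    simp only [this, Finset.sum_sub_distrib, Finset.sum_add_distrib, ← Finset.mul_sum,
      sum_posInd, sum_posInd_mul, hdeg]
    ring
  rw [hsd, sum_posInd_mul]
  have hunion : ((Nplus E u ∪ Nplus E v).card : ℝ) =
      2 * D - ((Nplus E u ∩ Nplus E v).card : ℝ) := by
    have := Finset.card_union_add_card_inter (Nplus E u) (Nplus E v)
    have h : ((Nplus E u ∪ Nplus E v).card : ℝ) + ((Nplus E u ∩ Nplus E v).card : ℝ) =
        (Nplus E u).card + (Nplus E v).card := by exact_mod_cast this
    rw [hdeg, hdeg] at h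
    linarith
  have hinter : ((Nplus E u ∩ Nplus E v).card : ℝ) ≤ D := by
    rw [← hdeg u]
    exact_mod_cast Finset.card_le_card Finset.inter_subset_left
  have ha0 : (0 : ℝ) ≤ ((Nplus E u ∩ Nplus E v).card : ℝ) := Nat.cast_nonneg _
  by_cases huv : u = v
  · subst huv
    have : posInd E u u = 1 := by simp [posInd, mem_Nplus]
    simp only [this, corrDist, if_true]
    linarith
  simp only [corrDist, if_neg huv, hunion]
  generalize ((Nplus E u ∩ Nplus E v).card : ℝ) = a at *
  have hden : 0 < 2 * D - a := by linarith
  have hq : (a / (2 * D - a)) * (2 * D - a) = a := div_mul_cancel₀ _ hden.ne'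
  have hq0 : 0 ≤ a / (2 * D - a) := by positivity
  have hq1 : a / (2 * D - a) ≤ 1 := (div_le_one hden).mpr (by linarith)
  generalize a / (2 * D - a) = q at *
  by_cases h : v ∈ Nplus E u
  · simp only [posInd, if_pos h]
    nlinarith [mul_nonneg (sub_nonneg.mpr hq1) (sub_nonneg.mpr hinter)]
  · simp only [posInd, if_neg h]
    nlinarith [mul_nonneg hq0 (sub_nonneg.mpr hinter)]

lemma cost_eq (E : V → V → Prop) [DecidableRel E] :
    (∑ u, ∑ v ∈ Nplus E u, corrDist E u v) +
      (∑ u, ∑ v ∈ Nminus E u, (1 - corrDist E u v)) =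
    ∑ u, ∑ v, (posInd E u v * corrDist E u v + (1 - posInd E u v) * (1 - corrDist E u v)) := by
  rw [← Finset.sum_add_distrib]
  refine Finset.sum_congr rfl fun u _ => ?_
  rw [Finset.sum_add_distrib]
  congr 1
  · simp [posInd, Finset.sum_ite_mem]
  · rw [← Finset.sum_subset (Finset.subset_univ (Nminus E u))]
    · refine Finset.sum_congr rfl fun v hv => ?_
      simp [posInd, (mem_Nminus E u v).mp hv]
    · intro v _ hv
      have : v ∈ Nplus E u := by simpa [mem_Nminus] using hv
      simp [posInd, this]

lemma sum_cost_le (E : V → V → Prop) [DecidableRel E] (hsymm : ∀ u v, E u v ↔ E v u)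
    (D : ℝ) (hdeg : ∀ u, ((Nplus E u).card : ℝ) = D) :
    D * ((∑ u, ∑ v ∈ Nplus E u, corrDist E u v) +
      (∑ u, ∑ v ∈ Nminus E u, (1 - corrDist E u v))) ≤ 3 * badWeight (posInd E) := by
  rw [cost_eq, ← sum_pairs_eq (posInd E) (posInd_symm E hsymm)]
  rw [Finset.mul_sum]
  refine Finset.sum_le_sum fun u _ => ?_
  rw [Finset.mul_sum]
  exact Finset.sum_le_sum fun v _ => pair_cost_le E D hdeg u v

/-- The diagonal term `v = u` vanishes because the self-loop is positive and never cut. -/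
lemma disag_eq (E : V → V → Prop) [DecidableRel E] (c : V → V) (u : V) :
    (disag E c u : ℝ) = ∑ v, (posInd E u v * (if c u = c v then 0 else 1) +
      (1 - posInd E u v) * (1 - if c u = c v then 0 else 1)) := by
  rw [disag, ← Finset.sum_boole]
  refine Finset.sum_congr rfl fun v _ => ?_
  simp only [posInd, mem_Nplus]
  by_cases h1 : v = u
  · subst h1
    simp
  · by_cases h2 : E u v <;> by_cases h3 : c u = c v <;> simp [h1, h2, h3]

/-- if the positive subgraph is regular, the fractional cost of the
correlation metric in the `ℓ_1`-norm objective is at most `6 · OPT(1)`. -/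
theorem regular_corr_metric_l1 (E : V → V → Prop) [DecidableRel E]
    (hsymm : ∀ u v, E u v ↔ E v u)
    (hreg : ∀ u v : V, (Nplus E u).card = (Nplus E v).card) :
    (∑ u, ∑ v ∈ Nplus E u, corrDist E u v) +
      (∑ u, ∑ v ∈ Nminus E u, (1 - corrDist E u v)) ≤ 6 * (OPT1 E : ℝ) := by
  rcases isEmpty_or_nonempty V with hV | ⟨⟨u₀⟩⟩
  · simp
  set D : ℝ := ((Nplus E u₀).card : ℝ) with hD
  have hdeg : ∀ u, ((Nplus E u).card : ℝ) = D := fun u => by rw [hD, hreg u u₀]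
  have hpos : 0 < D :=
    Nat.cast_pos.mpr (Finset.card_pos.mpr ⟨u₀, (mem_Nplus E u₀ u₀).mpr (Or.inl rfl)⟩)
  obtain ⟨c, -, hc⟩ := Finset.exists_mem_eq_inf' (⟨id, Finset.mem_univ id⟩ : Finset.univ.Nonempty)
    fun c : V → V => ∑ u, disag E c u
  have hOPT : (OPT1 E : ℝ) = ∑ u, (disag E c u : ℝ) := by
    rw [OPT1, hc, Nat.cast_sum]
  have hcost := sum_cost_le E hsymm D hdeg
  have hbad := badWeight_le (posInd E) (fun u v => if c u = c v then 0 else 1) D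
    (posInd_symm E hsymm)
    (fun u v => by unfold posInd; split_ifs <;> norm_num)
    (fun u v => by unfold posInd; split_ifs <;> norm_num)
    (fun u => by rw [sum_posInd, hdeg]) hpos.le
    (fun u v => by split_ifs <;> norm_num)
    (fun u v => by split_ifs <;> norm_num)
    (fun u v w => by
      by_cases h1 : c u = c v
      · simp [← h1]
      · simp only [if_neg h1]
        split_ifs <;> norm_num)
  simp only [← disag_eq] at hbad
  rw [hOPT]
  refine le_of_mul_le_mul_left (hcost.trans ?_) hpos
  linarith
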